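/- Let φ be a continuous flow on a compact metric space X and Λ a compact φ-invariant subset with topological dimension 1. If x ∈ Λ and H is a cross-section of time τ through x such that each point of φ_{[−τ,τ]}(H) lies on a unique arc φ_{[−τ,τ]}(y), y ∈ H (so that φ restricted to [−τ,τ] × K is injective for every compact K ⊆ H), then Λ ∩ H is zero-dimensional. -/

import Mathlib

/-- `DimLE Y n` : the covering dimension of `Y` is at most `n`. -/
def DimLE (Y : Type*) [TopologicalSpace Y] (n : ℕ) : Prop :=
  ∀ (ι : Type) (U : ι → Set Y), (∀ i, IsOpen (U i)) → (⋃ i, U i) = Set.univ →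
    ∃ V : ι → Set Y, (∀ i, IsOpen (V i)) ∧ (∀ i, V i ⊆ U i) ∧
      (⋃ i, V i) = Set.univ ∧ ∀ y : Y, {i | y ∈ V i}.encard ≤ (n : ℕ∞) + 1

/-!
The flow embeds `[0, τ] × (Λ ∩ H)` in `Λ`, and if `[a, b] × K` with `K` compact embeds in a space of
covering dimension at most one, then `K` is totally disconnected. Otherwise, let `y ≠ z` lie in one
component of `K`, and cover `[a, b] × K` by open sets `V₀`, `V₁`, `V₂` that avoid `[a, b] × {y}`,
`([a, b] × {z}) ∪ ({b} × K)` and `{a} × K` respectively. If no point is common to all three, the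
signed number of times the segment `[a, b] × {c}` passes from `V₁` to `V₂` is locally constant in
`c`, although it is `1` at `y` and `0` at `z`. Dimension at most one provides such a cover.
-/

open Set Filter Topology Uniformity UniformSpace

theorem DimLE.of_isClosedEmbedding {A B : Type*} [TopologicalSpace A] [TopologicalSpace B]
    {n : ℕ} (hB : DimLE B n) {f : A → B} (hf : IsClosedEmbedding f) : DimLE A n := by
  intro ι U hU hcov
  choose W hWo hWU using fun i ↦ hf.isInducing.isOpen_iff.mp (hU i)
  have hWcov : ⋃ o : Option ι, o.elim (range f)ᶜ W = univ := by
    rw [iUnion_option, eq_univ_iff_forall]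
    intro b
    by_cases hb : b ∈ range f
    · obtain ⟨x, rfl⟩ := hb
      obtain ⟨i, hi⟩ := iUnion_eq_univ_iff.mp hcov x
      exact Or.inr (mem_iUnion_of_mem i ((hWU i).superset hi))
    · exact Or.inl hb
  obtain ⟨V, hVo, hVW, hVcov, hVcard⟩ := hB (Option ι) (fun o ↦ o.elim (range f)ᶜ W)
    (Option.rec hf.isClosed_range.isOpen_compl hWo) hWcov
  refine ⟨fun i ↦ f ⁻¹' V (some i), fun i ↦ (hVo _).preimage hf.continuous,
    fun i ↦ (preimage_mono (hVW (some i))).trans (hWU i).subset, ?_, fun y ↦ ?_⟩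
  · refine eq_univ_of_forall fun x ↦ ?_
    obtain ⟨_ | i, hi⟩ := iUnion_eq_univ_iff.mp hVcov (f x)
    · exact absurd (mem_range_self x) (hVW none hi)
    · exact mem_iUnion_of_mem i hi
  · refine le_trans ?_ (hVcard (f y))
    rw [← (Option.some_injective ι).encard_image]
    exact encard_le_encard (image_subset_iff.mpr fun i hi ↦ hi)

theorem dimLE_zero_of_totallyDisconnectedSpace {K : Type*} [TopologicalSpace K] [T2Space K]
    [CompactSpace K] [TotallyDisconnectedSpace K] : DimLE K 0 := by
  intro ι U hU hcov
  obtain ⟨n, W, hW, hWcov, hWd⟩ :=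
    (TopologicalSpace.IsOpenCover.of_sets hU hcov).exists_finite_nonempty_disjoint_clopen_cover
  choose r hr using fun j ↦ (hW j).2
  refine ⟨fun i ↦ ⋃ j ∈ r ⁻¹' {i}, (W j : Set K),
    fun i ↦ isOpen_biUnion fun j _ ↦ (W j).isClopen.isOpen,
    fun i ↦ iUnion₂_subset fun j hj ↦ hj ▸ hr j, ?_, fun y ↦ ?_⟩
  · refine eq_univ_of_forall fun y ↦ ?_
    obtain ⟨j, hj⟩ := mem_iUnion.mp (hWcov (mem_univ y))
    exact mem_iUnion_of_mem (r j) (mem_biUnion rfl hj)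
  · simp only [Nat.cast_zero, zero_add, encard_le_one_iff_subsingleton]
    rintro _ hi _ hi'
    obtain ⟨j, rfl, hj⟩ := mem_iUnion₂.mp hi
    obtain ⟨k, rfl, hk⟩ := mem_iUnion₂.mp hi'
    refine congrArg r (hWd.eq fun h ↦ ?_)
    exact disjoint_left.mp (TopologicalSpace.Clopens.coe_disjoint.mpr h) hj hk

/-- The signed crossing of an edge of a `{0, 1, 2}`-labelled graph: edges from `1` to `2` count
`1`, edges from `2` to `1` count `-1`, and all others `0`. On an open cover without triple
intersections it is a Čech cocycle. -/
def crossing : Fin 3 → Fin 3 → ℤ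
  | 1, 2 => 1
  | 2, 1 => -1
  | _, _ => 0

theorem crossing_add_crossing {i j k l : Fin 3} (hi : i ≠ l) (hj : j ≠ l) (hk : k ≠ l) :
    crossing i j + crossing j k = crossing i k := by
  revert i j k l
  decide

theorem crossing_eq_zero {i j l : Fin 3} (hl : l ≠ 0) (hi : i ≠ l) (hj : j ≠ l) :
    crossing i j = 0 := by
  revert i j l
  decide

theorem crossing_self : ∀ i : Fin 3, crossing i i = 0 := by
  decide

/-- The signed number of crossings along the first `n` edges of the labelled path `u`, the discrete
analogue of a winding number. -/
def crossingNumber (u : ℕ → Fin 3) (n : ℕ) : ℤ :=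
  ∑ j ∈ Finset.range n, crossing (u j) (u (j + 1))

theorem crossingNumber_eq_crossing {u : ℕ → Fin 3} {l : Fin 3} (hu : ∀ j, u j ≠ l) (n : ℕ) :
    crossingNumber u n = crossing (u 0) (u n) := by
  induction n with
  | zero => simp [crossingNumber, crossing_self]
  | succ n ih =>
    rw [crossingNumber, Finset.sum_range_succ, ← crossingNumber, ih,
      crossing_add_crossing (hu 0) (hu n) (hu (n + 1))]

theorem crossingNumber_add_crossing {u v : ℕ → Fin 3}
    (h : ∀ j, ∃ l, u j ≠ l ∧ u (j + 1) ≠ l ∧ v j ≠ l ∧ v (j + 1) ≠ l) (n : ℕ) :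
    crossingNumber u n + crossing (u n) (v n) = crossing (u 0) (v 0) + crossingNumber v n := by
  induction n with
  | zero => simp [crossingNumber]
  | succ n ih =>
    obtain ⟨l, hu, hu', hv, hv'⟩ := h n
    have upper := crossing_add_crossing hu hu' hv'
    have lower := crossing_add_crossing hu hv hv'
    rw [crossingNumber, crossingNumber, Finset.sum_range_succ, Finset.sum_range_succ,
      ← crossingNumber, ← crossingNumber]
    linear_combination ih + upper - lower

theorem crossingNumber_congr {u v : ℕ → Fin 3} {n : ℕ}
    (h : ∀ j, ∃ l, u j ≠ l ∧ u (j + 1) ≠ l ∧ v j ≠ l ∧ v (j + 1) ≠ l)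
    (hu₀ : u 0 ≠ 2) (hv₀ : v 0 ≠ 2) (hun : u n ≠ 1) (hvn : v n ≠ 1) :
    crossingNumber u n = crossingNumber v n := by
  have hstart : crossing (u 0) (v 0) = 0 := crossing_eq_zero (by decide) hu₀ hv₀
  have hend : crossing (u n) (v n) = 0 := crossing_eq_zero (by decide) hun hvn
  simpa only [hstart, hend, add_zero, zero_add] using crossingNumber_add_crossing h n

theorem crossingNumber_eq_zero {u : ℕ → Fin 3} {l : Fin 3} (hl : l ≠ 0) (hu : ∀ j, u j ≠ l)
    (n : ℕ) : crossingNumber u n = 0 := by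
  rw [crossingNumber_eq_crossing hu, crossing_eq_zero hl (hu 0) (hu n)]

theorem crossingNumber_eq_one {u : ℕ → Fin 3} {n : ℕ} (hu : ∀ j, u j ≠ 0) (hu₀ : u 0 ≠ 2)
    (hun : u n ≠ 1) : crossingNumber u n = 1 := by
  have hstart : u 0 = 1 := by have := hu 0; omega
  have hend : u n = 2 := by have := hu n; omega
  rw [crossingNumber_eq_crossing hu, hstart, hend, crossing]

section Strip

variable {K : Type*} [TopologicalSpace K] [CompactSpace K] {a b : ℝ}

theorem exists_monotone_Icc_prod_nhds_subset_open_cover [R1Space K] {ι : Type*} (hab : a ≤ b)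
    {V : ι → Set (Icc a b × K)} (hVo : ∀ i, IsOpen (V i)) (hVcov : ⋃ i, V i = univ) :
    ∃ t : ℕ → Icc a b, t 0 = a ∧ Monotone t ∧ (∃ n, t n = b) ∧
      ∀ y, ∃ W ∈ 𝓝 y, ∀ j, ∃ i, Icc (t j) (t (j + 1)) ×ˢ W ⊆ V i := by
  let : UniformSpace K := uniformSpaceOfCompactR1
  obtain ⟨E, hE, hEV⟩ := lebesgue_number_lemma isCompact_univ hVo hVcov.ge
  rw [uniformity_prod_eq_comap_prod] at hE
  obtain ⟨⟨δ, F⟩, ⟨hδ, hF⟩, hδF⟩ :=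
    ((Metric.uniformity_basis_dist_le.prod (𝓤 K).basis_sets).comap _).mem_iff.mp hE
  refine ⟨Icc.addNSMul hab δ, Icc.addNSMul_zero hab, Icc.monotone_addNSMul hab hδ.le,
    (Icc.addNSMul_eq_right hab hδ).imp fun n hn ↦ hn n le_rfl,
    fun y ↦ ⟨ball y F, ball_mem_nhds y hF, fun j ↦ ?_⟩⟩
  obtain ⟨i, hi⟩ := hEV (Icc.addNSMul hab δ j, y) (mem_univ _)
  refine ⟨i, fun p hp ↦ hi (hδF ⟨?_, hp.2⟩)⟩
  rw [mem_ofPred_eq, dist_comm]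
  exact Icc.abs_sub_addNSMul_le hab hδ.le j hp.1

theorem nonempty_iInter_of_isOpen_cover_Icc_prod [R1Space K] (hab : a ≤ b)
    {V : Fin 3 → Set (Icc a b × K)} (hVo : ∀ i, IsOpen (V i)) (hVcov : ⋃ i, V i = univ)
    {y z : K} (hyz : z ∈ connectedComponent y) (hV₀ : ∀ p ∈ V 0, p.2 ≠ y)
    (hV₁ : ∀ p ∈ V 1, p.2 ≠ z ∧ (p.1 : ℝ) ≠ b) (hV₂ : ∀ p ∈ V 2, (p.1 : ℝ) ≠ a) :
    (⋂ i, V i).Nonempty := by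
  by_contra hV
  have hV (p : Icc a b × K) : ∃ l, p ∉ V l := by
    simpa using fun hp ↦ hV ⟨p, mem_iInter.mpr hp⟩
  obtain ⟨t, ht₀, ht, ⟨n, htn⟩, hW⟩ := exists_monotone_Icc_prod_nhds_subset_open_cover hab hVo hVcov
  choose W hW u hu using hW
  have hleft {c d : K} (hc : d ∈ W c) (j : ℕ) : (t j, d) ∈ V (u c j) :=
    hu c j ⟨left_mem_Icc.mpr (ht j.le_succ), hc⟩
  have hright {c d : K} (hc : d ∈ W c) (j : ℕ) : (t (j + 1), d) ∈ V (u c j) :=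
    hu c j ⟨right_mem_Icc.mpr (ht j.le_succ), hc⟩
  have hself (c : K) : c ∈ W c := mem_of_mem_nhds (hW c)
  have hbot (c : K) : u c 0 ≠ 2 := fun h ↦ hV₂ _ (h ▸ hleft (hself c) 0) ht₀
  have htop (c : K) : u c n ≠ 1 := fun h ↦ (hV₁ _ (h ▸ hleft (hself c) n)).2 htn
  have hconst : IsLocallyConstant fun c ↦ crossingNumber (u c) n := by
    refine (IsLocallyConstant.iff_eventually_eq _).mpr fun c ↦ ?_
    filter_upwards [hW c] with d hd
    refine crossingNumber_congr (fun j ↦ ?_) (hbot d) (hbot c) (htop d) (htop c)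
    -- The four labels at edge `j` all contain the point `(t (j + 1), d)`, so they omit a label.
    obtain ⟨l, hl⟩ := hV (t (j + 1), d)
    have ne {i : Fin 3} (hi : (t (j + 1), d) ∈ V i) : i ≠ l := fun h ↦ hl (h ▸ hi)
    exact ⟨l, ne (hright (hself d) j), ne (hleft (hself d) (j + 1)), ne (hright hd j),
      ne (hleft hd (j + 1))⟩
  have hy : crossingNumber (u y) n = 1 :=
    crossingNumber_eq_one (fun j h ↦ hV₀ _ (h ▸ hleft (hself y) j) rfl) (hbot y) (htop y)
  have hz : crossingNumber (u z) n = 0 :=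
    crossingNumber_eq_zero one_ne_zero (fun j h ↦ (hV₁ _ (h ▸ hleft (hself z) j)).1 rfl) n
  have hyz' : crossingNumber (u y) n = crossingNumber (u z) n :=
    hconst.apply_eq_of_isPreconnected isPreconnected_connectedComponent mem_connectedComponent hyz
  exact one_ne_zero (hy.symm.trans (hyz'.trans hz))

theorem totallyDisconnectedSpace_of_dimLE_one_Icc_prod [T2Space K] (hab : a < b)
    (h : DimLE (Icc a b × K) 1) : TotallyDisconnectedSpace K := by
  rw [totallyDisconnectedSpace_iff_connectedComponent_singleton]
  refine fun y ↦ eq_singleton_iff_unique_mem.mpr ⟨mem_connectedComponent, fun z hz ↦ ?_⟩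
  by_contra hzy
  let U : Fin 3 → Set (Icc a b × K) :=
    ![{p | p.2 ≠ y}, {p | p.2 ≠ z ∧ (p.1 : ℝ) ≠ b}, {p | (p.1 : ℝ) ≠ a}]
  have hUo : ∀ i, IsOpen (U i) := by
    have hfst (c : ℝ) : IsOpen {p : Icc a b × K | (p.1 : ℝ) ≠ c} :=
      isOpen_ne_fun (by fun_prop) continuous_const
    have hsnd (c : K) : IsOpen {p : Icc a b × K | p.2 ≠ c} :=
      isOpen_ne_fun continuous_snd continuous_const
    exact Fin.forall_fin_succ.mpr ⟨hsnd y, Fin.forall_fin_two.mpr ⟨(hsnd z).inter (hfst b), hfst a⟩⟩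
  have hUcov : ⋃ i, U i = univ := by
    refine iUnion_eq_univ_iff.mpr fun p ↦ ?_
    by_cases hpy : p.2 = y
    · by_cases hpa : (p.1 : ℝ) = a
      · exact ⟨1, fun hpz ↦ hzy (hpz.symm.trans hpy), fun hpb ↦ hab.ne (hpa.symm.trans hpb)⟩
      · exact ⟨2, hpa⟩
    · exact ⟨0, hpy⟩
  obtain ⟨V, hVo, hVU, hVcov, hVcard⟩ := h (Fin 3) U hUo hUcov
  obtain ⟨p, hp⟩ := nonempty_iInter_of_isOpen_cover_Icc_prod hab.le hVo hVcov hz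
    (hVU 0) (hVU 1) (hVU 2)
  have hcard := hVcard p
  have : {i | p ∈ V i} = univ := eq_univ_of_forall (mem_iInter.mp hp)
  rw [this, encard_univ, ENat.card_eq_coe_fintype_card, Fintype.card_fin] at hcard
  exact absurd hcard (by decide)

end Strip

theorem dimLE_zero_of_injOn_Icc_prod {X Y : Type*} [TopologicalSpace X]
    [TopologicalSpace Y] [T2Space Y] {f : ℝ × X → Y} {K : Set X} {L : Set Y} {a b : ℝ}
    (hab : a < b) (hK : IsCompact K) (hL : DimLE L 1) (hf : ContinuousOn f (Icc a b ×ˢ K))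
    (hfL : MapsTo f (Icc a b ×ˢ K) L) (hfinj : InjOn f (Icc a b ×ˢ K)) : DimLE K 0 := by
  have : CompactSpace K := isCompact_iff_compactSpace.mp hK
  have hF : IsClosedEmbedding (hfL.restrict f _ _ ∘ (Homeomorph.Set.prod (Icc a b) K).symm) :=
    ((hf.mapsToRestrict hfL).comp (Homeomorph.continuous _)).isClosedEmbedding
      ((hfL.restrict_inj.mpr hfinj).comp (Homeomorph.injective _))
  have : T2Space K :=
    (hF.isEmbedding.comp (isEmbedding_prodMkRight ⟨a, left_mem_Icc.mpr hab.le⟩)).t2Space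
  have := totallyDisconnectedSpace_of_dimLE_one_Icc_prod hab (hL.of_isClosedEmbedding hF)
  exact dimLE_zero_of_totallyDisconnectedSpace

theorem invariant_inter_crossSection_zero_dim_general {X : Type*} [TopologicalSpace X] [T2Space X]
    {φ : ℝ → X → X} (hφ : Continuous fun p : ℝ × X ↦ φ p.1 p.2) {Λ H : Set X} {τ : ℝ} (hτ : 0 < τ)
    (hΛ : ∀ t ∈ Icc 0 τ, MapsTo (φ t) Λ Λ) (hΛdim : DimLE Λ 1) (hΛH : IsCompact (Λ ∩ H))
    (hinj : InjOn (fun p : ℝ × X ↦ φ p.1 p.2) (Icc 0 τ ×ˢ (Λ ∩ H))) :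
    DimLE ↥(Λ ∩ H) 0 :=
  dimLE_zero_of_injOn_Icc_prod hτ hΛH hΛdim hφ.continuousOn
    (fun p hp ↦ hΛ p.1 hp.1 hp.2.1) hinj

theorem invariant_inter_crossSection_zero_dim
    {X : Type*} [MetricSpace X] [CompactSpace X]
    (φ : ℝ → X → X)
    (hcont : Continuous fun p : ℝ × X => φ p.1 p.2)
    (h0 : ∀ x, φ 0 x = x)
    (hadd : ∀ t s : ℝ, ∀ x, φ (t + s) x = φ s (φ t x))
    (Λ : Set X) (hΛc : IsCompact Λ) (hΛinv : ∀ t : ℝ, φ t '' Λ = Λ)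
    (hΛdim : DimLE ↥Λ 1 ∧ ¬ DimLE ↥Λ 0)
    (x : X) (hxΛ : x ∈ Λ)
    (H : Set X) (τ : ℝ) (hτ : 0 < τ)
    (hHc : IsCompact H) (hxH : x ∈ H)
    (hnbhd : (⋃ s ∈ Set.Icc (-τ) τ, (fun y => φ s y) '' H) ∈ nhds x)
    (hcs : ∀ y ∈ H, ∀ s ∈ Set.Icc (-τ) τ, φ s y ∈ H → φ s y = y)
    (hinj : Set.InjOn (fun p : ℝ × X => φ p.1 p.2) (Set.Icc (-τ) τ ×ˢ H)) :
    DimLE ↥(Λ ∩ H) 0 := by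
  exact invariant_inter_crossSection_zero_dim_general hcont hτ
    (fun t _ ↦ mapsTo_iff_image_subset.mpr (hΛinv t).subset) hΛdim.1 (hΛc.inter hHc)
    (hinj.mono (prod_mono (Icc_subset_Icc_left (neg_nonpos.mpr hτ.le)) inter_subset_right))
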